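/- (Dirichlet aggregation; core of the representation-invariance theorem.) Fix integers K ≥ 1 and N_1, …, N_K ≥ 1, let S = {z ∈ ℝ^K : z_k > 0 for all k and Σ_k z_k < 1}, and let (Z_1, …, Z_K) be a random vector whose law has density with respect to Lebesgue measure proportional to ∏_{k=1}^K z_k^{N_k − 1} on S and 0 outside S. Let {I_1, …, I_L} be a partition of {1, …, K} and set Ñ_ℓ = Σ_{k ∈ I_ℓ} N_k and Z̃_ℓ = Σ_{k ∈ I_ℓ} Z_k. Then the law of (Z̃_1, …, Z̃_L) has density with respect to Lebesgue measure on ℝ^L proportional to ∏_{ℓ=1}^L t_ℓ^{Ñ_ℓ − 1} on S̃ = {t ∈ ℝ^L : t_ℓ > 0 for all ℓ and Σ_ℓ t_ℓ < 1} and 0 outside S̃. -/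

import Mathlib

open MeasureTheory

/-!
Independent gamma variables of a common rate add up to a gamma variable whose shape parameter is the
sum of the shapes; this is read off their characteristic functions `(r / (r - i t)) ^ a`. Hence
summing over the blocks of a partition sends a product of gamma laws to the product of the gamma
laws with aggregated shapes. The Dirichlet density is the product of the gamma densities of rate `1`
times a function of the total `∑ k, z k` only, namely a multiple of its exponential cut off at `1`.
Since the total is unchanged by summing over blocks, this factor passes through the aggregation.
-/

section

open ProbabilityTheory Filter Topology
open scoped ENNReal Real

section Tonelli

theorem lintegral_fin_nat_prod_eq_prod {n : ℕ} {E : Fin n → Type*}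
    {mE : ∀ i, MeasurableSpace (E i)} {μ : ∀ i, Measure (E i)} [∀ i, SigmaFinite (μ i)]
    {f : ∀ i, E i → ℝ≥0∞} (hf : ∀ i, Measurable (f i)) :
    ∫⁻ x, ∏ i, f i (x i) ∂Measure.pi μ = ∏ i, ∫⁻ x, f i x ∂μ i := by
  induction n with
  | zero => simp
  | succ n ih =>
    have hf_succ : ∀ i : Fin n, Measurable (f i.succ) := fun i ↦ hf i.succ
    calc
      _ = ∫⁻ x, f 0 x.1 * ∏ i : Fin n, f i.succ (x.2 i)
            ∂(μ 0).prod (Measure.pi fun i : Fin n ↦ μ i.succ) := by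
          rw [← (measurePreserving_piFinSuccAbove μ 0).symm.lintegral_comp (by fun_prop)]
          simp_rw [MeasurableEquiv.piFinSuccAbove_symm_apply, Fin.insertNthEquiv,
            Fin.prod_univ_succ, Fin.insertNth_zero, Equiv.coe_fn_mk, Fin.cons_succ,
            Fin.zero_succAbove, Fin.cons_zero]
          rfl
      _ = (∫⁻ x, f 0 x ∂μ 0) * ∏ i : Fin n, ∫⁻ x, f i.succ x ∂μ i.succ := by
          have hprod : Measurable fun y : ∀ i : Fin n, E i.succ ↦ ∏ i, f i.succ (y i) := by
            fun_prop
          rw [← ih hf_succ, ← lintegral_prod_mul (hf 0).aemeasurable hprod.aemeasurable]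
      _ = ∏ i, ∫⁻ x, f i x ∂μ i := by rw [Fin.prod_univ_succ]

variable {ι : Type*} [Fintype ι] {E : ι → Type*} {mE : ∀ i, MeasurableSpace (E i)}
  {μ : ∀ i, Measure (E i)} [∀ i, SigmaFinite (μ i)] {f : ∀ i, E i → ℝ≥0∞}

theorem lintegral_fintype_prod_eq_prod (hf : ∀ i, Measurable (f i)) :
    ∫⁻ x, ∏ i, f i (x i) ∂Measure.pi μ = ∏ i, ∫⁻ x, f i x ∂μ i := by
  let e := (Fintype.equivFin ι).symm
  rw [← (measurePreserving_piCongrLeft μ e).lintegral_comp (by fun_prop)]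
  simp_rw [← e.prod_comp, MeasurableEquiv.coe_piCongrLeft, Equiv.piCongrLeft_apply_apply]
  exact lintegral_fin_nat_prod_eq_prod fun i ↦ hf (e i)

theorem pi_withDensity (hf : ∀ i, Measurable (f i))
    [∀ i, SigmaFinite ((μ i).withDensity (f i))] :
    Measure.pi (fun i ↦ (μ i).withDensity (f i)) =
      (Measure.pi μ).withDensity fun x ↦ ∏ i, f i (x i) := by
  refine Measure.pi_eq fun s hs ↦ ?_
  rw [withDensity_apply _ (.univ_pi hs), Measure.restrict_pi_pi, lintegral_fintype_prod_eq_prod hf]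
  simp_rw [withDensity_apply _ (hs _)]

end Tonelli

theorem map_withDensity_comp {α β : Type*} [MeasurableSpace α] [MeasurableSpace β]
    (μ : Measure α) {f : α → β} (hf : Measurable f) {g : β → ℝ≥0∞} (hg : Measurable g) :
    (μ.withDensity (g ∘ f)).map f = (μ.map f).withDensity g := by
  ext s hs
  rw [Measure.map_apply hf hs, withDensity_apply _ (hf hs), withDensity_apply _ hs,
    setLIntegral_map hs hg hf, Function.comp_def]

section Gamma

variable {a r : ℝ}

@[fun_prop]
theorem measurable_gammaPDF (a r : ℝ) : Measurable (gammaPDF a r) :=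
  (measurable_gammaPDFReal a r).ennreal_ofReal

theorem gammaPDF_mul_exp (hr : 0 < r) {t : ℝ} (ht : t < r) (x : ℝ) :
    gammaPDF a r x * ENNReal.ofReal (rexp (t * x)) =
      ENNReal.ofReal ((r / (r - t)) ^ a) * gammaPDF a (r - t) x := by
  have hrt : 0 < r - t := sub_pos.mpr ht
  rcases lt_or_ge x 0 with hx | hx
  · simp [gammaPDF_of_neg hx]
  rw [gammaPDF_of_nonneg hx, gammaPDF_of_nonneg hx, ← ENNReal.ofReal_mul' (by positivity),
    ← ENNReal.ofReal_mul (by positivity)]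
  congr 1
  have hexp : rexp (-(r * x)) * rexp (t * x) = rexp (-((r - t) * x)) := by
    rw [← Real.exp_add]
    ring_nf
  have hpow : (r / (r - t)) ^ a * (r - t) ^ a = r ^ a := by
    rw [Real.div_rpow hr.le hrt.le, div_mul_cancel₀ _ (by positivity)]
  rw [mul_assoc, hexp, ← hpow]
  ring

theorem mgf_id_gammaMeasure (ha : 0 < a) (hr : 0 < r) {t : ℝ} (ht : t < r) :
    mgf id (gammaMeasure a r) t = (r / (r - t)) ^ a := by
  have hrt : 0 < r - t := sub_pos.mpr ht
  rw [mgf, integral_eq_lintegral_of_nonneg_ae (ae_of_all _ fun x ↦ (Real.exp_pos _).le)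
    (by fun_prop), gammaMeasure,
    lintegral_withDensity_eq_lintegral_mul _ (by fun_prop) (by fun_prop)]
  simp_rw [Pi.mul_apply, id, gammaPDF_mul_exp hr ht]
  rw [lintegral_const_mul _ (by fun_prop), lintegral_gammaPDF_eq_one ha hrt, mul_one,
    ENNReal.toReal_ofReal (by positivity)]

theorem Iio_subset_integrableExpSet_gammaMeasure (ha : 0 < a) (hr : 0 < r) :
    Set.Iio r ⊆ integrableExpSet id (gammaMeasure a r) := fun t (ht : t < r) ↦ by
  have := sub_pos.mpr ht
  refine Integrable.of_integral_ne_zero (ne_of_gt ?_)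
  rw [← mgf, mgf_id_gammaMeasure ha hr ht]
  positivity

theorem div_sub_mem_slitPlane (hr : 0 < r) {z : ℂ} (hz : z.re < r) :
    (r : ℂ) / (r - z) ∈ Complex.slitPlane := by
  have hre : 0 < ((r : ℂ) - z).re := by simpa using hz
  refine .inl ?_
  rw [Complex.div_re, Complex.ofReal_re, Complex.ofReal_im, zero_mul, zero_div, add_zero]
  exact div_pos (mul_pos hr hre) (Complex.normSq_pos.mpr fun h ↦ by simp [h] at hre)

theorem complexMGF_id_gammaMeasure (ha : 0 < a) (hr : 0 < r) {z : ℂ} (hz : z.re < r) :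
    complexMGF id (gammaMeasure a r) z = (r / (r - z)) ^ (a : ℂ) := by
  -- Both sides are holomorphic for `Re z < r`, so it is enough to compare them on the real axis.
  have hopen : IsOpen {w : ℂ | w.re < r} := isOpen_lt Complex.continuous_re continuous_const
  have hlhs : AnalyticOnNhd ℂ (complexMGF id (gammaMeasure a r)) {w | w.re < r} :=
    analyticOnNhd_complexMGF.mono fun w hw ↦
      interior_maximal (Iio_subset_integrableExpSet_gammaMeasure ha hr) isOpen_Iio hw
  have hrhs : AnalyticOnNhd ℂ (fun w : ℂ ↦ ((r : ℂ) / (r - w)) ^ (a : ℂ)) {w | w.re < r} := by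
    refine DifferentiableOn.analyticOnNhd (fun w hw ↦ ?_) hopen
    have hslit := div_sub_mem_slitPlane hr hw
    have hne : (r : ℂ) - w ≠ 0 := fun h ↦ by simp [h] at hslit
    have hdiv : DifferentiableAt ℂ (fun w : ℂ ↦ (r : ℂ) / (r - w)) w := by
      fun_prop (disch := exact hne)
    exact (hdiv.cpow_const hslit).differentiableWithinAt
  have hreal : ∀ᶠ t : ℝ in 𝓝[≠] 0,
      complexMGF id (gammaMeasure a r) t = ((r : ℂ) / (r - t)) ^ (a : ℂ) := by
    filter_upwards [eventually_nhdsWithin_of_eventually_nhds (eventually_lt_nhds hr)] with t ht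
    have := sub_pos.mpr ht
    rw [complexMGF_ofReal, mgf_id_gammaMeasure ha hr ht, Complex.ofReal_cpow (by positivity)]
    push_cast
    rfl
  have hofReal : Tendsto ((↑) : ℝ → ℂ) (𝓝[≠] 0) (𝓝[≠] 0) :=
    Complex.continuous_ofReal.continuousAt.continuousWithinAt.tendsto_nhdsWithin
      fun t ht ↦ by simpa using ht
  exact hlhs.eqOn_of_preconnected_of_frequently_eq hrhs
    (convex_halfSpace_re_lt r).isPreconnected (by simpa using hr)
    (hofReal.frequently hreal.frequently) hz

theorem charFun_gammaMeasure (ha : 0 < a) (hr : 0 < r) (t : ℝ) :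
    charFun (gammaMeasure a r) t = (r / (r - t * Complex.I)) ^ (a : ℂ) := by
  rw [← complexMGF_id_mul_I, complexMGF_id_gammaMeasure ha hr (by simpa using hr)]

theorem cpow_sum {ι : Type*} {x : ℂ} (hx : x ≠ 0) (f : ι → ℂ) (s : Finset ι) :
    x ^ ∑ i ∈ s, f i = ∏ i ∈ s, x ^ f i := by
  induction s using Finset.cons_induction with
  | empty => simp
  | cons i s hi ih => rw [Finset.sum_cons, Finset.prod_cons, Complex.cpow_add _ _ hx, ih]

theorem charFun_gammaMeasure_sum {ι : Type*} {s : Finset ι} (hs : s.Nonempty) {a : ι → ℝ}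
    (ha : ∀ i ∈ s, 0 < a i) (hr : 0 < r) (t : ℝ) :
    charFun (gammaMeasure (∑ i ∈ s, a i) r) t = ∏ i ∈ s, charFun (gammaMeasure (a i) r) t := by
  have hne : (r : ℂ) / (r - t * Complex.I) ≠ 0 :=
    Complex.slitPlane_ne_zero (div_sub_mem_slitPlane hr (by simpa using hr))
  rw [charFun_gammaMeasure (Finset.sum_pos ha hs) hr, Complex.ofReal_sum, cpow_sum hne]
  exact Finset.prod_congr rfl fun i hi ↦ (charFun_gammaMeasure (ha i hi) hr t).symm

end Gamma

section FiberSum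

variable {ι κ : Type*} [Fintype ι] [DecidableEq κ]

/-- Aggregation of coordinates along `p`: the `l`-th coordinate of `fiberSum p z` is the sum of the
coordinates of `z` over the block `p ⁻¹' {l}` of the partition of `ι` that `p` encodes. -/
def fiberSum {M : Type*} [AddCommMonoid M] (p : ι → κ) (z : ι → M) : κ → M :=
  fun l ↦ ∑ k with p k = l, z k

@[fun_prop]
theorem measurable_fiberSum {M : Type*} [AddCommMonoid M] [MeasurableSpace M] [MeasurableAdd₂ M]
    (p : ι → κ) : Measurable (fiberSum p : (ι → M) → κ → M) := by
  unfold fiberSum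
  fun_prop

theorem sum_fiberSum [Fintype κ] {M : Type*} [AddCommMonoid M] (p : ι → κ) (z : ι → M) :
    ∑ l, fiberSum p z l = ∑ k, z k :=
  Finset.sum_fiberwise _ p z

theorem fiberSum_pos {p : ι → κ} (hp : p.Surjective) {a : ι → ℝ} (ha : ∀ k, 0 < a k) (l : κ) :
    0 < fiberSum p a l := by
  obtain ⟨k, hk⟩ := hp l
  exact Finset.sum_pos (fun k _ ↦ ha k) ⟨k, by simpa using hk⟩

theorem charFun_map_fiberSum_pi [Fintype κ] {E : Type*} [NormedAddCommGroup E]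
    [InnerProductSpace ℝ E] [MeasurableSpace E] [BorelSpace E] [SecondCountableTopology E]
    (p : ι → κ) (μ : ι → Measure E) [∀ k, SigmaFinite (μ k)] (t : PiLp 2 fun _ : κ ↦ E) :
    charFun (((Measure.pi μ).map (fiberSum p)).map (WithLp.toLp 2)) t =
      ∏ k, charFun (μ k) (t (p k)) := by
  have hinner : ∀ z : ι → E, inner ℝ (WithLp.toLp 2 (fiberSum p z)) t =
      inner ℝ (WithLp.toLp 2 z) (WithLp.toLp 2 fun k ↦ t (p k)) := fun z ↦ by
    simp only [PiLp.inner_apply, fiberSum, sum_inner]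
    rw [← Finset.sum_fiberwise Finset.univ p]
    refine Finset.sum_congr rfl fun l _ ↦ Finset.sum_congr rfl fun k hk ↦ ?_
    rw [(Finset.mem_filter.mp hk).2]
  rw [← charFun_pi (μ := μ) (WithLp.toLp 2 fun k ↦ t (p k)),
    Measure.map_map (by fun_prop) (by fun_prop), charFun_apply, charFun_apply,
    integral_map (by fun_prop) (by fun_prop), integral_map (by fun_prop) (by fun_prop)]
  simp only [Function.comp_apply, hinner]

theorem map_fiberSum_pi_gammaMeasure [Fintype κ] {p : ι → κ} (hp : p.Surjective)
    {a : ι → ℝ} (ha : ∀ k, 0 < a k) {r : ℝ} (hr : 0 < r) :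
    (Measure.pi fun k ↦ gammaMeasure (a k) r).map (fiberSum p) =
      Measure.pi fun l ↦ gammaMeasure (fiberSum p a l) r := by
  have := fun k ↦ isProbabilityMeasure_gammaMeasure (ha k) hr
  have := fun l ↦ isProbabilityMeasure_gammaMeasure (fiberSum_pos hp ha l) hr
  refine charFun_eq_pi_iff.mp fun t ↦ ?_
  rw [charFun_map_fiberSum_pi, ← Finset.prod_fiberwise Finset.univ p]
  refine Finset.prod_congr rfl fun l _ ↦ ?_
  obtain ⟨k, hk⟩ := hp l
  rw [fiberSum, charFun_gammaMeasure_sum ⟨k, by simpa using hk⟩ (fun k _ ↦ ha k) hr]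
  exact Finset.prod_congr rfl fun k hk ↦ by rw [(Finset.mem_filter.mp hk).2]

end FiberSum

section Dirichlet

variable {ι : Type*} [Fintype ι]

/-- The function `c ∏ z k ^ (a k - 1)` on the open corner simplex `{z | (∀ k, 0 < z k) ∧ ∑ z k < 1}`
and `0` elsewhere: the density of the first coordinates of a Dirichlet law with extra parameter `1`,
up to the choice of the constant `c`, which is left free. -/
noncomputable def dirichletDensity (c : ℝ) (a : ι → ℝ) (z : ι → ℝ) : ℝ≥0∞ :=
  if (∀ k, 0 < z k) ∧ ∑ k, z k < 1 then ENNReal.ofReal (c * ∏ k, z k ^ (a k - 1)) else 0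

/-- The density `C exp s` on `s < 1` and `0` elsewhere. Evaluated at the sum of the coordinates, it
is the density of a Dirichlet law relative to a product of gamma laws of rate `1`. -/
noncomputable def truncatedExp (C s : ℝ) : ℝ≥0∞ :=
  if s < 1 then ENNReal.ofReal (C * rexp s) else 0

@[fun_prop]
theorem measurable_truncatedExp (C : ℝ) : Measurable (truncatedExp C) :=
  Measurable.ite measurableSet_Iio (by fun_prop) measurable_const

theorem prod_Gamma_pos {a : ι → ℝ} (ha : ∀ k, 0 < a k) : 0 < ∏ k, Real.Gamma (a k) :=
  Finset.prod_pos fun k _ ↦ Real.Gamma_pos_of_pos (ha k)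

theorem prod_gammaPDF_one_of_nonneg {a : ι → ℝ} (ha : ∀ k, 0 < a k) {z : ι → ℝ}
    (hz : ∀ k, 0 ≤ z k) :
    ∏ k, gammaPDF (a k) 1 (z k) = ENNReal.ofReal
      ((∏ k, Real.Gamma (a k))⁻¹ * (∏ k, z k ^ (a k - 1)) * rexp (-∑ k, z k)) := by
  simp_rw [gammaPDF_of_nonneg (hz _), Real.one_rpow, one_div, one_mul]
  rw [← ENNReal.ofReal_prod_of_nonneg fun k _ ↦ ?_]
  · rw [Finset.prod_mul_distrib, Finset.prod_mul_distrib, Finset.prod_inv_distrib,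
      ← Finset.sum_neg_distrib, Real.exp_sum]
  · have := ha k
    have := hz k
    positivity

theorem prod_gammaPDF_mul_truncatedExp {a : ι → ℝ} (ha : ∀ k, 0 < a k) (c : ℝ) {z : ι → ℝ}
    (hz : ∀ k, z k ≠ 0) :
    (∏ k, gammaPDF (a k) 1 (z k)) * truncatedExp (c * ∏ k, Real.Gamma (a k)) (∑ k, z k) =
      dirichletDensity c a z := by
  by_cases hpos : ∀ k, 0 < z k
  · by_cases hsum : ∑ k, z k < 1
    · have hΓ := prod_Gamma_pos ha
      have hpow : 0 ≤ ∏ k, z k ^ (a k - 1) :=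
        Finset.prod_nonneg fun k _ ↦ Real.rpow_nonneg (hpos k).le _
      rw [prod_gammaPDF_one_of_nonneg ha fun k ↦ (hpos k).le, truncatedExp, if_pos hsum,
        dirichletDensity, if_pos ⟨hpos, hsum⟩, ← ENNReal.ofReal_mul (by positivity), Real.exp_neg]
      congr 1
      field_simp
    · rw [truncatedExp, if_neg hsum, mul_zero, dirichletDensity, if_neg fun h ↦ hsum h.2]
  · rw [dirichletDensity, if_neg fun h ↦ hpos h.1]
    obtain ⟨k, hk⟩ := not_forall.mp hpos
    have hneg : z k < 0 := lt_of_le_of_ne (not_lt.mp hk) (hz k)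
    rw [Finset.prod_eq_zero (Finset.mem_univ k) (gammaPDF_of_neg hneg), zero_mul]

theorem withDensity_dirichletDensity {a : ι → ℝ} (ha : ∀ k, 0 < a k) (c : ℝ) :
    volume.withDensity (dirichletDensity c a) =
      (Measure.pi fun k ↦ gammaMeasure (a k) 1).withDensity
        (fun z ↦ truncatedExp (c * ∏ k, Real.Gamma (a k)) (∑ k, z k)) := by
  have : ∀ k, IsProbabilityMeasure (volume.withDensity (gammaPDF (a k) 1)) := fun k ↦
    isProbabilityMeasure_gammaMeasure (ha k) one_pos
  have hne : ∀ᵐ z : ι → ℝ, ∀ k, z k ≠ 0 := ae_all_iff.mpr fun k ↦ Measure.ae_eval_ne _ k 0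
  simp only [gammaMeasure]
  rw [pi_withDensity fun k ↦ measurable_gammaPDF (a k) 1,
    ← withDensity_mul _ (by fun_prop) (by fun_prop)]
  refine (withDensity_congr_ae ?_).symm
  filter_upwards [hne] with z hz using prod_gammaPDF_mul_truncatedExp ha c hz

theorem map_fiberSum_withDensity_dirichletDensity {κ : Type*} [Fintype κ] [DecidableEq κ]
    {p : ι → κ} (hp : p.Surjective) {a : ι → ℝ} (ha : ∀ k, 0 < a k) (c : ℝ) :
    (volume.withDensity (dirichletDensity c a)).map (fiberSum p) =
      volume.withDensity (dirichletDensity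
        (c * (∏ k, Real.Gamma (a k)) / ∏ l, Real.Gamma (fiberSum p a l)) (fiberSum p a)) := by
  have hpos := fiberSum_pos hp ha
  rw [withDensity_dirichletDensity ha, withDensity_dirichletDensity hpos,
    div_mul_cancel₀ _ (prod_Gamma_pos hpos).ne',
    ← map_fiberSum_pi_gammaMeasure hp ha one_pos,
    ← map_withDensity_comp _ (measurable_fiberSum p) (by fun_prop)]
  simp only [Function.comp_def, sum_fiberSum]

theorem dirichletDensity_natCast {N : ι → ℕ} (hN : ∀ k, 1 ≤ N k) (c : ℝ)
    [DecidablePred fun z : ι → ℝ ↦ (∀ k, 0 < z k) ∧ ∑ k, z k < 1] :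
    dirichletDensity c (fun k ↦ (N k : ℝ)) = fun z ↦
      if (∀ k, 0 < z k) ∧ ∑ k, z k < 1 then
        ENNReal.ofReal (c * ∏ k, z k ^ (N k - 1)) else 0 := by
  ext z
  simp only [dirichletDensity, ← Nat.cast_pred (hN _), Real.rpow_natCast]

end Dirichlet

theorem exists_surjective_eq_filter_of_partition {ι κ : Type*} [Fintype ι] [DecidableEq κ]
    {I : κ → Finset ι} (hne : ∀ l, (I l).Nonempty)
    (hdisj : ∀ l l', l ≠ l' → Disjoint (I l) (I l')) (hcover : ∀ k, ∃ l, k ∈ I l) :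
    ∃ p : ι → κ, p.Surjective ∧ ∀ l, I l = Finset.univ.filter (p · = l) := by
  choose p hp using hcover
  have hmem : ∀ k l, k ∈ I l ↔ p k = l := fun k l ↦
    ⟨fun hk ↦ by_contra fun hkl ↦ Finset.disjoint_left.mp (hdisj _ _ hkl) (hp k) hk,
      fun hkl ↦ hkl ▸ hp k⟩
  exact ⟨p, fun l ↦ (hne l).imp fun k ↦ (hmem k l).mp, fun l ↦ by ext k; simp [hmem]⟩

theorem dirichlet_dsm_stmt15_general
    {Ω ι κ : Type*} [MeasurableSpace Ω] [Fintype ι] [Fintype κ] {P : Measure Ω}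
    {a : ι → ℝ} (ha : ∀ k, 0 < a k) {Z : Ω → ι → ℝ} (hZ : AEMeasurable Z P) {c : ℝ} (hc : 0 < c)
    (hZlaw : P.map Z = volume.withDensity (dirichletDensity c a))
    {I : κ → Finset ι} (hne : ∀ l, (I l).Nonempty)
    (hdisj : ∀ l l', l ≠ l' → Disjoint (I l) (I l')) (hcover : ∀ k, ∃ l, k ∈ I l) :
    ∃ c' : ℝ, 0 < c' ∧ P.map (fun ω l ↦ ∑ k ∈ I l, Z ω k) =
      volume.withDensity (dirichletDensity c' fun l ↦ ∑ k ∈ I l, a k) := by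
  classical
  obtain ⟨p, hp, hI⟩ := exists_surjective_eq_filter_of_partition hne hdisj hcover
  refine ⟨c * (∏ k, Real.Gamma (a k)) / ∏ l, Real.Gamma (fiberSum p a l),
    div_pos (mul_pos hc (prod_Gamma_pos ha)) (prod_Gamma_pos (fiberSum_pos hp ha)), ?_⟩
  simp only [hI]
  calc P.map (fiberSum p ∘ Z) = (P.map Z).map (fiberSum p) :=
        (AEMeasurable.map_map_of_aemeasurable (by fun_prop) hZ).symm
    _ = _ := by rw [hZlaw, map_fiberSum_withDensity_dirichletDensity hp ha]; rfl

end

/-- Dirichlet aggregation, core of representation invariance: if `(Z 1, …, Z K)`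
has density proportional to `∏ k, z k ^ (N k − 1)` on `S = {z : ∀ k, z k > 0, Σ z k < 1}`
(`0` outside `S`) and `{I 1, …, I L}` is a partition of `{1, …, K}`, then with
`Ñ ℓ = Σ_{k ∈ I ℓ} N k` the aggregated vector `Z̃ ℓ = Σ_{k ∈ I ℓ} Z k` has density proportional
to `∏ ℓ, t ℓ ^ (Ñ ℓ − 1)` on `S̃ = {t : ∀ ℓ, t ℓ > 0, Σ t ℓ < 1}` (`0` outside `S̃`). -/
theorem dirichlet_dsm_stmt15
    {Ω : Type*} [MeasurableSpace Ω] (P : Measure Ω) [IsProbabilityMeasure P]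
    {K L : ℕ} (hK : 1 ≤ K) (N : Fin K → ℕ) (hN : ∀ k, 1 ≤ N k)
    (Z : Ω → (Fin K → ℝ)) (hZmeas : Measurable Z)
    (c : ℝ) (hc : 0 < c)
    (hZlaw : Measure.map Z P = volume.withDensity (fun z : Fin K → ℝ =>
      if (∀ k, 0 < z k) ∧ ∑ k, z k < 1 then
        ENNReal.ofReal (c * ∏ k, z k ^ (N k - 1)) else 0))
    (I : Fin L → Finset (Fin K))
    (hne : ∀ l, (I l).Nonempty)
    (hdisj : ∀ l l', l ≠ l' → Disjoint (I l) (I l'))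
    (hcover : ∀ k, ∃ l, k ∈ I l)
    (Ntil : Fin L → ℕ) (hNtil : ∀ l, Ntil l = ∑ k ∈ I l, N k) :
    ∃ c' : ℝ, 0 < c' ∧
      Measure.map (fun ω => fun l => ∑ k ∈ I l, Z ω k) P =
        volume.withDensity (fun t : Fin L → ℝ =>
          if (∀ l, 0 < t l) ∧ ∑ l, t l < 1 then
            ENNReal.ofReal (c' * ∏ l, t l ^ (Ntil l - 1)) else 0) := by
  have hNtil_pos : ∀ l, 1 ≤ Ntil l := fun l ↦ by
    have : 0 < ∑ k ∈ I l, N k := Finset.sum_pos (fun k _ ↦ hN k) (hne l)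
    rwa [hNtil]
  simpa only [← Nat.cast_sum, ← hNtil, dirichletDensity_natCast hNtil_pos] using
    dirichlet_dsm_stmt15_general (fun k ↦ Nat.cast_pos.mpr (hN k)) hZmeas.aemeasurable hc
      (hZlaw.trans (by rw [dirichletDensity_natCast hN])) hne hdisj hcover
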